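/- arXiv:0904.1906 — 3 statements merged into one kernel-verified Lean document; each statement's English description precedes it below -/
import Mathlib

section
/- Let 1, α₁, α₂ be linearly independent over ℤ, let m_{ν−1}, m_ν, m_{ν+1} be consecutive best approximations such that the determinant of the 3×3 matrix with rows m_{ν−1}, m_ν, m_{ν+1} is nonzero, put A_ν = M_ν^{1/τ}/120, and suppose ζ_ν < A_ν · M_{ν+1}^{−τ/(τ−1)} and ζ_{ν+1} ≤ (8·M_{ν−1}·M_ν)^{−1}. Then there exists an integer point (x₁⁰, x₂⁰) such that x₁⁰ > 0, x₂⁰ > 0, max{x₁⁰, x₂⁰} ≤ 20·M_{ν+1}, and ‖α₁x₁⁰ + α₂x₂⁰‖ < 24^τ·M_ν^{(1−τ)/τ}·(max{x₁⁰, x₂⁰})^{−τ}. -/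
/-- distance from a real number to the nearest integer -/
noncomputable def nint (ξ : ℝ) : ℝ := |ξ - round ξ|

/-- `1, α₁, α₂` are linearly independent over `ℤ` -/
def ZLinIndep (α₁ α₂ : ℝ) : Prop :=
  ∀ a b c : ℤ, (a : ℝ) + b * α₁ + c * α₂ = 0 → a = 0 ∧ b = 0 ∧ c = 0

/-- the golden ratio τ = (1+√5)/2 -/
noncomputable def tau : ℝ := (1 + Real.sqrt 5) / 2

/-- the value of the linear form ζ(m) = m₀ + m₁α₁ + m₂α₂ at an integer vector m -/
noncomputable def zform (α₁ α₂ : ℝ) (m : ℤ × ℤ × ℤ) : ℝ :=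
  (m.1 : ℝ) + m.2.1 * α₁ + m.2.2 * α₂

/-- the height M(m) = max{|m₁|, |m₂|} of an integer vector m = (m₀, m₁, m₂) -/
def hgt (m : ℤ × ℤ × ℤ) : ℤ := max |m.2.1| |m.2.2|

/-- `m` is a best approximation (in the sense of the linear form) for `α₁, α₂`:
`|ζ(m)|` is minimal among all integer vectors `n` with `0 < max{|n₁|,|n₂|} ≤ max{|m₁|,|m₂|}`. -/
noncomputable def IsBestApprox (α₁ α₂ : ℝ) (m : ℤ × ℤ × ℤ) : Prop :=
  0 < hgt m ∧
  ∀ n : ℤ × ℤ × ℤ, 0 < hgt n → hgt n ≤ hgt m →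
    |zform α₁ α₂ m| ≤ |zform α₁ α₂ n|

/-- `m` and `m'` are two consecutive best approximations (`m = m_ν`, `m' = m_{ν+1}`):
both are best approximations, `M(m) < M(m')`, and no best approximation has height
strictly between them. -/
noncomputable def ConsecutiveBest (α₁ α₂ : ℝ) (m m' : ℤ × ℤ × ℤ) : Prop :=
  IsBestApprox α₁ α₂ m ∧ IsBestApprox α₁ α₂ m' ∧ hgt m < hgt m' ∧
  ∀ n : ℤ × ℤ × ℤ, IsBestApprox α₁ α₂ n → hgt n ≤ hgt m ∨ hgt m' ≤ hgt n

/-!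
Let `Δ(m, n) = m₁n₂ - m₂n₁`. Expanding the determinant along the column of values of the linear
form gives `1 ≤ |ζ(a)Δ(b,c) - ζ(b)Δ(a,c) + ζ(c)Δ(a,b)|`. The hypotheses make the last two terms
small, and Dirichlet's theorem bounds `ζ(a)` by about `M(b)⁻²`, so `|Δ(b,c)| > M(b)²/2`.

After swapping the coordinates and changing signs we may assume `|b₂| ≤ b₁` and `Δ(b,c) > 0`. If
`b₂ > 0`, take `x = b`. Otherwise choose `k` so that the first coordinate of `x = 2c - kb` lies in
`(0, b₁]`; then `b₁x₂ = 2Δ(b,c) + b₂x₁ > 0`, and `|ζ(x)|` is at most about `M(c)/M(b)` times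
`|ζ(b)|`.

For the exponent `t` only `t² ≤ t + 1` matters: it says that `1/t - t/(t-1) ≤ -2` (smallness of
`ζ(b)Δ(a,c)`) and that `1 - t/(t-1) ≤ -t` (the final estimate).
-/

section Pigeonhole

variable {ι R : Type*} [Ring R] [LinearOrder R] [IsStrictOrderedRing R] [FloorRing R]

lemma exists_ne_abs_fract_sub_fract_mul_lt_one {s : Finset ι} {N : ℕ} (hN : 0 < N)
    (hs : N < s.card) (f : ι → R) :
    ∃ p ∈ s, ∃ q ∈ s, p ≠ q ∧ |Int.fract (f p) - Int.fract (f q)| * N < 1 := by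
  have hN' : (0 : R) < N := by exact_mod_cast hN
  have hmaps : Set.MapsTo (fun p ↦ ⌊Int.fract (f p) * N⌋) s (Finset.Ico (0 : ℤ) N) := by
    intro p _
    rw [Finset.mem_coe, Finset.mem_Ico, Int.floor_nonneg, Int.floor_lt]
    exact ⟨mul_nonneg (Int.fract_nonneg _) hN'.le,
      by simpa using mul_lt_mul_of_pos_right (Int.fract_lt_one (f p)) hN'⟩
  obtain ⟨p, hp, q, hq, hpq, heq⟩ :=
    Finset.exists_ne_map_eq_of_card_lt_of_maps_to (by simpa using hs) hmaps
  refine ⟨p, hp, q, hq, hpq, ?_⟩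
  have hlt := Int.abs_sub_lt_one_of_floor_eq_floor heq
  rwa [← sub_mul, abs_mul, abs_of_pos hN'] at hlt

end Pigeonhole

section IntegerPoints

/-- The minor `m₁n₂ - m₂n₁` of the matrix with rows `m` and `n`, in the columns that determine the
height. -/
def planarMinor (m n : ℤ × ℤ × ℤ) : ℤ := m.2.1 * n.2.2 - m.2.2 * n.2.1

variable {α₁ α₂ : ℝ} {a b c m n : ℤ × ℤ × ℤ}

lemma hgt_neg (m : ℤ × ℤ × ℤ) : hgt (-m) = hgt m := by simp [hgt]

lemma hgt_swap (m : ℤ × ℤ × ℤ) : hgt (m.1, m.2.swap) = hgt m := max_comm _ _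

lemma hgt_pos_iff : 0 < hgt m ↔ m.2 ≠ 0 := by
  rw [hgt, lt_max_iff, abs_pos, abs_pos, ne_eq m.2, Prod.ext_iff, not_and_or]
  rfl

lemma hgt_le_iff {H : ℤ} : hgt m ≤ H ↔ m.2 ∈ Finset.Icc (-H, -H) (H, H) := by
  rw [hgt, max_le_iff, abs_le, abs_le, Finset.mem_Icc, Prod.le_def, Prod.le_def]
  exact and_and_and_comm

lemma zform_neg (m : ℤ × ℤ × ℤ) : zform α₁ α₂ (-m) = -zform α₁ α₂ m := by
  simp only [zform, Prod.fst_neg, Prod.snd_neg, Int.cast_neg]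
  ring

lemma zform_sub (m n : ℤ × ℤ × ℤ) : zform α₁ α₂ (m - n) = zform α₁ α₂ m - zform α₁ α₂ n := by
  simp only [zform, Prod.fst_sub, Prod.snd_sub, Int.cast_sub]
  ring

lemma zform_zsmul (k : ℤ) (m : ℤ × ℤ × ℤ) : zform α₁ α₂ (k • m) = k * zform α₁ α₂ m := by
  simp only [zform, Prod.smul_fst, Prod.smul_snd, smul_eq_mul, Int.cast_mul]
  ring

lemma zform_swap (m : ℤ × ℤ × ℤ) : zform α₂ α₁ (m.1, m.2.swap) = zform α₁ α₂ m := by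
  simp only [zform, Prod.fst_swap, Prod.snd_swap]
  ring

lemma nint_le_abs_zform (m : ℤ × ℤ × ℤ) : nint (α₁ * m.2.1 + α₂ * m.2.2) ≤ |zform α₁ α₂ m| := by
  have hζ : zform α₁ α₂ m = α₁ * m.2.1 + α₂ * m.2.2 - (-m.1 : ℤ) := by
    rw [zform, Int.cast_neg]
    ring
  rw [hζ]
  exact round_le _ _

lemma abs_zform_neg_round (p : ℤ × ℤ) :
    |zform α₁ α₂ (-round (α₁ * p.1 + α₂ * p.2), p)| = nint (α₁ * p.1 + α₂ * p.2) := by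
  rw [nint, zform, Int.cast_neg]
  congr 1
  ring

lemma planarMinor_neg_left (m n : ℤ × ℤ × ℤ) : planarMinor (-m) n = -planarMinor m n := by
  simp only [planarMinor, Prod.snd_neg, Prod.fst_neg]
  ring

lemma planarMinor_neg_right (m n : ℤ × ℤ × ℤ) : planarMinor m (-n) = -planarMinor m n := by
  simp only [planarMinor, Prod.snd_neg, Prod.fst_neg]
  ring

lemma planarMinor_swap (m n : ℤ × ℤ × ℤ) :
    planarMinor (m.1, m.2.swap) (n.1, n.2.swap) = -planarMinor m n := by
  simp only [planarMinor, Prod.fst_swap, Prod.snd_swap]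
  ring

lemma abs_planarMinor_le (m n : ℤ × ℤ × ℤ) : |planarMinor m n| ≤ 2 * hgt m * hgt n := by
  have hm : 0 ≤ hgt m := (abs_nonneg _).trans (le_max_left _ _)
  calc |planarMinor m n| ≤ |m.2.1| * |n.2.2| + |m.2.2| * |n.2.1| := by
        rw [← abs_mul, ← abs_mul]
        exact abs_sub _ _
    _ ≤ hgt m * hgt n + hgt m * hgt n := by
        gcongr
        exacts [le_max_left _ _, le_max_right _ _, le_max_right _ _, le_max_left _ _]
    _ = 2 * hgt m * hgt n := by ring

lemma intCast_det_eq_zform_planarMinor (a b c : ℤ × ℤ × ℤ) :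
    ((Matrix.det !![a.1, a.2.1, a.2.2; b.1, b.2.1, b.2.2; c.1, c.2.1, c.2.2] : ℤ) : ℝ) =
      zform α₁ α₂ a * planarMinor b c - zform α₁ α₂ b * planarMinor a c +
        zform α₁ α₂ c * planarMinor a b := by
  simp only [Matrix.det_fin_three, zform, planarMinor, Matrix.of_apply, Matrix.cons_val]
  push_cast
  ring

lemma one_le_abs_zform_mul_abs_planarMinor_add
    (hdet : Matrix.det !![a.1, a.2.1, a.2.2; b.1, b.2.1, b.2.2; c.1, c.2.1, c.2.2] ≠ 0) :
    1 ≤ |zform α₁ α₂ a| * |(planarMinor b c : ℝ)| + |zform α₁ α₂ b| * (2 * hgt a * hgt c) +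
      |zform α₁ α₂ c| * (2 * hgt a * hgt b) := by
  have hminor (m n : ℤ × ℤ × ℤ) : |(planarMinor m n : ℝ)| ≤ 2 * hgt m * hgt n := by
    exact_mod_cast abs_planarMinor_le m n
  calc (1 : ℝ)
      ≤ |zform α₁ α₂ a * planarMinor b c - zform α₁ α₂ b * planarMinor a c +
          zform α₁ α₂ c * planarMinor a b| := by
        rw [← intCast_det_eq_zform_planarMinor]
        exact_mod_cast Int.one_le_abs hdet
    _ ≤ |zform α₁ α₂ a * planarMinor b c| + |zform α₁ α₂ b * planarMinor a c| +
          |zform α₁ α₂ c * planarMinor a b| :=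
        (abs_add_le _ _).trans (by gcongr; exact abs_sub _ _)
    _ ≤ _ := by
        simp only [abs_mul]
        gcongr <;> exact hminor _ _

lemma hgt_sq_lt_two_mul_abs_planarMinor (hb : 2 ≤ hgt b)
    (hdet : Matrix.det !![a.1, a.2.1, a.2.2; b.1, b.2.1, b.2.2; c.1, c.2.1, c.2.2] ≠ 0)
    (hζa : |zform α₁ α₂ a| * ((hgt b : ℝ) ^ 2 - 1) < 1)
    (hζbc : |zform α₁ α₂ b| * (2 * hgt a * hgt c) + |zform α₁ α₂ c| * (2 * hgt a * hgt b) ≤ 1 / 3) :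
    hgt b ^ 2 < 2 * |planarMinor b c| := by
  have hb' : (2 : ℝ) ≤ hgt b := by exact_mod_cast hb
  have hmain : 2 / 3 ≤ |zform α₁ α₂ a| * |(planarMinor b c : ℝ)| := by
    linarith [one_le_abs_zform_mul_abs_planarMinor_add (α₁ := α₁) (α₂ := α₂) hdet]
  have hminor : 0 < |(planarMinor b c : ℝ)| :=
    pos_of_mul_pos_right (by linarith) (abs_nonneg (zform α₁ α₂ a))
  have hlt : 2 / 3 * ((hgt b : ℝ) ^ 2 - 1) < |(planarMinor b c : ℝ)| :=
    calc 2 / 3 * ((hgt b : ℝ) ^ 2 - 1)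
        ≤ |zform α₁ α₂ a| * |(planarMinor b c : ℝ)| * ((hgt b : ℝ) ^ 2 - 1) := by
          gcongr
          nlinarith
      _ = |zform α₁ α₂ a| * ((hgt b : ℝ) ^ 2 - 1) * |(planarMinor b c : ℝ)| := by ring
      _ < |(planarMinor b c : ℝ)| := mul_lt_of_lt_one_left hminor hζa
  have hsq : (hgt b : ℝ) ^ 2 < 2 * |(planarMinor b c : ℝ)| := by nlinarith
  exact_mod_cast hsq

lemma abs_zform_mul_hgt_add_le_one_third (ha : 0 < hgt a)
    (hab : hgt a ≤ hgt b) (hbc : hgt b ≤ hgt c)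
    (hζb : |zform α₁ α₂ b| * (hgt c : ℝ) ^ 2 ≤ 1 / 24)
    (hζc : |zform α₁ α₂ c| ≤ (8 * (hgt a : ℝ) * (hgt b : ℝ))⁻¹) :
    |zform α₁ α₂ b| * (2 * hgt a * hgt c) + |zform α₁ α₂ c| * (2 * hgt a * hgt b) ≤ 1 / 3 := by
  have ha' : (0 : ℝ) < hgt a := by exact_mod_cast ha
  have hb' : (0 : ℝ) < hgt b := by exact_mod_cast ha.trans_le hab
  have hac' : (hgt a : ℝ) ≤ hgt c := by exact_mod_cast hab.trans hbc
  have hc' : (0 : ℝ) ≤ hgt c := by linarith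
  have hsnd : |zform α₁ α₂ c| * (8 * hgt a * hgt b) ≤ 1 :=
    (le_div_iff₀ (by positivity)).1 (by rwa [one_div])
  have hfst : |zform α₁ α₂ b| * (hgt a * hgt c) ≤ |zform α₁ α₂ b| * (hgt c : ℝ) ^ 2 := by
    rw [sq]
    gcongr
  linarith

lemma exists_hgt_lt_abs_zform_mul_sq_sub_one_lt_one (α₁ α₂ : ℝ) {H : ℤ} (hH : 2 ≤ H) :
    ∃ n, 0 < hgt n ∧ hgt n < H ∧ |zform α₁ α₂ n| * ((H : ℝ) ^ 2 - 1) < 1 := by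
  lift H to ℕ using by lia
  have hsq : 2 ^ 2 ≤ H ^ 2 := by gcongr; exact_mod_cast hH
  have hsq_cast : ((H ^ 2 - 1 : ℕ) : ℝ) = (H : ℝ) ^ 2 - 1 := by
    rw [Nat.cast_sub (by lia), Nat.cast_pow, Nat.cast_one]
  let box : Finset (ℤ × ℤ) := Finset.Ico 0 (H : ℤ) ×ˢ Finset.Ico 0 (H : ℤ)
  have hcard : H ^ 2 - 1 < box.card := by
    rw [Finset.card_product, Int.card_Ico, sub_zero, Int.toNat_natCast, ← sq]
    lia
  obtain ⟨p, hp, q, hq, hpq, hlt⟩ := exists_ne_abs_fract_sub_fract_mul_lt_one (by lia) hcard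
    (fun p : ℤ × ℤ ↦ α₁ * p.1 + α₂ * p.2)
  rw [Finset.mem_product, Finset.mem_Ico, Finset.mem_Ico] at hp hq
  let n : ℤ × ℤ × ℤ := (⌊α₁ * q.1 + α₂ * q.2⌋ - ⌊α₁ * p.1 + α₂ * p.2⌋, p - q)
  have hζ : zform α₁ α₂ n =
      Int.fract (α₁ * p.1 + α₂ * p.2) - Int.fract (α₁ * q.1 + α₂ * q.2) := by
    simp only [zform, Int.fract, n, Prod.fst_sub, Prod.snd_sub, Int.cast_sub]
    ring
  refine ⟨n, hgt_pos_iff.2 (sub_ne_zero.2 hpq), ?_, ?_⟩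
  · simp only [hgt, n, Prod.fst_sub, Prod.snd_sub, max_lt_iff, abs_lt]
    lia
  · rwa [hζ, Int.cast_natCast, ← hsq_cast]

lemma exists_isBestApprox_hgt_le (α₁ α₂ : ℝ) (hn : 0 < hgt n) :
    ∃ m, IsBestApprox α₁ α₂ m ∧ hgt m ≤ hgt n ∧ |zform α₁ α₂ m| ≤ |zform α₁ α₂ n| := by
  let S : Finset (ℤ × ℤ) := (Finset.Icc (-hgt n, -hgt n) (hgt n, hgt n)).erase 0
  have mem_S {m : ℤ × ℤ × ℤ} : m.2 ∈ S ↔ 0 < hgt m ∧ hgt m ≤ hgt n := by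
    rw [Finset.mem_erase, hgt_pos_iff, hgt_le_iff]
  obtain ⟨p, hp, hmin⟩ := S.exists_min_image (fun p ↦ nint (α₁ * p.1 + α₂ * p.2))
    ⟨n.2, mem_S.2 ⟨hn, le_rfl⟩⟩
  let m : ℤ × ℤ × ℤ := (-round (α₁ * p.1 + α₂ * p.2), p)
  have hm : 0 < hgt m ∧ hgt m ≤ hgt n := mem_S.1 hp
  have hle {l : ℤ × ℤ × ℤ} (hl : 0 < hgt l) (hl' : hgt l ≤ hgt n) :
      |zform α₁ α₂ m| ≤ |zform α₁ α₂ l| := by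
    rw [abs_zform_neg_round]
    exact (hmin _ (mem_S.2 ⟨hl, hl'⟩)).trans (nint_le_abs_zform l)
  exact ⟨m, ⟨hm.1, fun l hl hl' ↦ hle hl (hl'.trans hm.2)⟩, hm.2, hle hn le_rfl⟩

lemma ConsecutiveBest.abs_zform_le_of_hgt_lt (hab : ConsecutiveBest α₁ α₂ a b) (hn : 0 < hgt n)
    (hnb : hgt n < hgt b) : |zform α₁ α₂ a| ≤ |zform α₁ α₂ n| := by
  obtain ⟨ha, -, -, hgap⟩ := hab
  obtain ⟨m, hm, hmn, hζ⟩ := exists_isBestApprox_hgt_le α₁ α₂ hn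
  have hma : hgt m ≤ hgt a := (hgap m hm).resolve_right (by lia)
  exact (ha.2 m hm.1 hma).trans hζ

lemma ConsecutiveBest.two_le_hgt (hab : ConsecutiveBest α₁ α₂ a b) : 2 ≤ hgt b := by
  have ha := hab.1.1
  have hlt := hab.2.2.1
  lia

lemma ConsecutiveBest.abs_zform_mul_hgt_sq_sub_one_lt_one (hab : ConsecutiveBest α₁ α₂ a b) :
    |zform α₁ α₂ a| * ((hgt b : ℝ) ^ 2 - 1) < 1 := by
  obtain ⟨n, hn, hnb, hlt⟩ := exists_hgt_lt_abs_zform_mul_sq_sub_one_lt_one α₁ α₂ hab.two_le_hgt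
  have hb : (2 : ℝ) ≤ hgt b := by exact_mod_cast hab.two_le_hgt
  have hsq : 0 ≤ (hgt b : ℝ) ^ 2 - 1 := by nlinarith
  exact (mul_le_mul_of_nonneg_right (hab.abs_zform_le_of_hgt_lt hn hnb) hsq).trans_lt hlt

lemma exists_two_zsmul_sub_zsmul_pos (hb₁ : 0 < b.2.1) (hb₂ : b.2.2 ≤ 0) (hb : -b.2.1 ≤ b.2.2)
    (hbc : b.2.1 ≤ hgt c) (hminor : b.2.1 ^ 2 < 2 * planarMinor b c) :
    ∃ k : ℤ, 0 < ((2 : ℤ) • c - k • b).2.1 ∧ 0 < ((2 : ℤ) • c - k • b).2.2 ∧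
      hgt ((2 : ℤ) • c - k • b) ≤ 4 * hgt c ∧ |k| * b.2.1 ≤ 3 * hgt c := by
  obtain ⟨hc₁, hc₂⟩ := max_le_iff.1 (le_refl (hgt c))
  rw [abs_le] at hc₁ hc₂
  let k := toIocDiv hb₁ 0 (2 * c.2.1)
  let x := (2 : ℤ) • c - k • b
  have hx₁ : 0 < x.2.1 ∧ x.2.1 ≤ b.2.1 := by
    simpa [x, k] using sub_toIocDiv_zsmul_mem_Ioc hb₁ 0 (2 * c.2.1)
  have hkb : k * b.2.1 = 2 * c.2.1 - x.2.1 := by simp [x]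
  have hbx : b.2.1 * x.2.2 = 2 * planarMinor b c + b.2.2 * x.2.1 := by
    simp only [x, planarMinor, Prod.snd_sub, Prod.fst_sub, Prod.smul_snd, Prod.smul_fst,
      smul_eq_mul]
    ring
  have hx₂ : 0 < x.2.2 := by
    refine pos_of_mul_pos_right (?_ : 0 < b.2.1 * x.2.2) hb₁.le
    nlinarith
  have hx₂' : x.2.2 ≤ 4 * hgt c := by
    refine le_of_mul_le_mul_left (?_ : b.2.1 * x.2.2 ≤ b.2.1 * (4 * hgt c)) hb₁
    rw [hbx, planarMinor]
    nlinarith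
  refine ⟨k, hx₁.1, hx₂, ?_, ?_⟩
  · refine max_le ?_ ?_
    · rw [abs_of_pos hx₁.1]
      lia
    · rwa [abs_of_pos hx₂]
  · rw [← abs_of_pos hb₁, ← abs_mul, hkb, abs_le]
    lia

lemma exists_pos_hgt_mul_abs_zform_le_of_planarMinor_pos (hb₁ : 0 < b.2.1)
    (hb : |b.2.2| ≤ b.2.1) (hbc : b.2.1 ≤ hgt c) (hζ : |zform α₁ α₂ c| ≤ |zform α₁ α₂ b|)
    (hminor : b.2.1 ^ 2 < 2 * planarMinor b c) :
    ∃ x : ℤ × ℤ × ℤ, 0 < x.2.1 ∧ 0 < x.2.2 ∧ hgt x ≤ 4 * hgt c ∧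
      b.2.1 * |zform α₁ α₂ x| ≤ 5 * hgt c * |zform α₁ α₂ b| := by
  have hbc' : (b.2.1 : ℝ) ≤ hgt c := by exact_mod_cast hbc
  have hb₁' : (0 : ℝ) < b.2.1 := by exact_mod_cast hb₁
  rcases lt_or_ge 0 b.2.2 with hb₂ | hb₂
  · refine ⟨b, hb₁, hb₂, ?_, ?_⟩
    · rw [hgt, max_le_iff, abs_of_pos hb₁]
      lia
    · gcongr
      linarith
  obtain ⟨k, hx₁, hx₂, hx, hk⟩ := exists_two_zsmul_sub_zsmul_pos hb₁ hb₂ (abs_le.1 hb).1 hbc hminor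
  have hk' : |(k : ℝ)| * b.2.1 ≤ 3 * hgt c := by exact_mod_cast hk
  refine ⟨(2 : ℤ) • c - k • b, hx₁, hx₂, hx, ?_⟩
  calc b.2.1 * |zform α₁ α₂ ((2 : ℤ) • c - k • b)|
      = b.2.1 * |2 * zform α₁ α₂ c - k * zform α₁ α₂ b| := by
        rw [zform_sub, zform_zsmul, zform_zsmul, Int.cast_ofNat]
    _ ≤ b.2.1 * (2 * |zform α₁ α₂ b| + |(k : ℝ)| * |zform α₁ α₂ b|) := by
        gcongr
        refine (abs_sub _ _).trans ?_
        rw [abs_mul, abs_mul, abs_two]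
        gcongr
    _ = 2 * b.2.1 * |zform α₁ α₂ b| + |(k : ℝ)| * b.2.1 * |zform α₁ α₂ b| := by ring
    _ ≤ 2 * hgt c * |zform α₁ α₂ b| + 3 * hgt c * |zform α₁ α₂ b| := by gcongr
    _ = 5 * hgt c * |zform α₁ α₂ b| := by ring

lemma exists_pos_hgt_mul_abs_zform_le (hb : 0 < hgt b) (hbc : hgt b ≤ hgt c)
    (hζ : |zform α₁ α₂ c| ≤ |zform α₁ α₂ b|) (hminor : hgt b ^ 2 < 2 * |planarMinor b c|) :
    ∃ x : ℤ × ℤ × ℤ, 0 < x.2.1 ∧ 0 < x.2.2 ∧ hgt x ≤ 4 * hgt c ∧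
      hgt b * |zform α₁ α₂ x| ≤ 5 * hgt c * |zform α₁ α₂ b| := by
  wlog hle : |b.2.2| ≤ |b.2.1| generalizing α₁ α₂ b c
  · obtain ⟨x, hx₁, hx₂, hx, hζx⟩ := this (α₁ := α₂) (α₂ := α₁) (b := (b.1, b.2.swap))
      (c := (c.1, c.2.swap)) (by rwa [hgt_swap]) (by rwa [hgt_swap, hgt_swap])
      (by rwa [zform_swap, zform_swap]) (by rwa [hgt_swap, planarMinor_swap, abs_neg])
      (le_of_not_ge hle)
    refine ⟨(x.1, x.2.swap), hx₂, hx₁, ?_, ?_⟩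
    · rwa [hgt_swap, ← hgt_swap c]
    · rwa [zform_swap, ← hgt_swap b, ← hgt_swap c, ← zform_swap b]
  wlog hb₁ : 0 < b.2.1 generalizing b
  · have hb₁' : 0 < |b.2.1| := by rwa [hgt, max_eq_left hle] at hb
    simpa only [hgt_neg, zform_neg, abs_neg] using this (b := -b) (by rwa [hgt_neg])
      (by rwa [hgt_neg]) (by rwa [zform_neg, abs_neg])
      (by rwa [hgt_neg, planarMinor_neg_left, abs_neg])
      (by simpa only [Prod.snd_neg, Prod.fst_neg, abs_neg] using hle)
      (neg_pos.2 (lt_of_le_of_ne (not_lt.1 hb₁) (abs_pos.1 hb₁')))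
  wlog hpos : 0 ≤ planarMinor b c generalizing c
  · simpa only [hgt_neg] using this (c := -c) (by rwa [hgt_neg]) (by rwa [zform_neg, abs_neg])
      (by rwa [planarMinor_neg_right, abs_neg])
      (by rw [planarMinor_neg_right]; exact neg_nonneg.2 (le_of_not_ge hpos))
  have hhgt : hgt b = b.2.1 := by rw [hgt, max_eq_left hle, abs_of_pos hb₁]
  rw [abs_of_pos hb₁] at hle
  rw [abs_of_nonneg hpos] at hminor
  rw [hhgt] at hbc hminor ⊢
  exact exists_pos_hgt_mul_abs_zform_le_of_planarMinor_pos hb₁ hle hbc hζ hminor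

end IntegerPoints

section Exponents

variable {t B C : ℝ}

lemma one_lt_tau : 1 < tau := Real.one_lt_goldenRatio

lemma tau_sq : tau ^ 2 = tau + 1 := Real.goldenRatio_sq

lemma sq_le_add_one_of_le_tau (ht : 0 ≤ t) (hτ : t ≤ tau) : t ^ 2 ≤ t + 1 := by
  nlinarith [tau_sq, one_lt_tau]

lemma one_div_sub_div_le_neg_two (ht : 1 < t) (hτ : t ≤ tau) : 1 / t - t / (t - 1) ≤ -2 := by
  have ht' : 0 < t - 1 := sub_pos.2 ht
  rw [div_sub_div _ _ (by positivity) ht'.ne', div_le_iff₀ (by positivity)]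
  linarith [sq_le_add_one_of_le_tau (by linarith) hτ]

lemma one_sub_div_le_neg (ht : 1 < t) (hτ : t ≤ tau) : 1 - t / (t - 1) ≤ -t := by
  have ht' : 0 < t - 1 := sub_pos.2 ht
  rw [one_sub_div ht'.ne', div_le_iff₀ ht']
  linarith [sq_le_add_one_of_le_tau (by linarith) hτ]

lemma rpow_mul_rpow_mul_sq_le_one (ht : 1 < t) (hτ : t ≤ tau) (hB : 0 ≤ B) (hBC : B ≤ C)
    (hC : 1 ≤ C) : B ^ (1 / t) * C ^ (-(t / (t - 1))) * C ^ 2 ≤ 1 := by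
  have hC₀ : 0 < C := by positivity
  calc B ^ (1 / t) * C ^ (-(t / (t - 1))) * C ^ 2
      ≤ C ^ (1 / t) * C ^ (-(t / (t - 1))) * C ^ (2 : ℝ) := by
        rw [Real.rpow_two]
        gcongr
    _ = C ^ (1 / t - t / (t - 1) + 2) := by
        rw [← Real.rpow_add hC₀, ← Real.rpow_add hC₀, ← sub_eq_add_neg]
    _ ≤ 1 := Real.rpow_le_one_of_one_le_of_nonpos hC
        (by linarith [one_div_sub_div_le_neg_two ht hτ])

lemma mul_rpow_mul_rpow_le (ht : 1 < t) (hτ : t ≤ tau) (hB : 0 < B) (hC : 1 ≤ C) :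
    C * (B ^ (1 / t) * C ^ (-(t / (t - 1)))) ≤ B * (B ^ ((1 - t) / t) * C ^ (-t)) := by
  have hC₀ : 0 < C := by positivity
  have hB_exp : B * B ^ ((1 - t) / t) = B ^ (1 / t) := by
    rw [mul_comm, ← Real.rpow_add_one hB.ne']
    congr 1
    field_simp
    ring
  have hC_exp : C * C ^ (-(t / (t - 1))) ≤ C ^ (-t) := by
    rw [mul_comm, ← Real.rpow_add_one hC₀.ne', neg_add_eq_sub]
    exact Real.rpow_le_rpow_of_exponent_le hC (one_sub_div_le_neg ht hτ)
  calc C * (B ^ (1 / t) * C ^ (-(t / (t - 1))))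
      = B ^ (1 / t) * (C * C ^ (-(t / (t - 1)))) := by ring
    _ ≤ B ^ (1 / t) * C ^ (-t) := by gcongr
    _ = B * (B ^ ((1 - t) / t) * C ^ (-t)) := by rw [← hB_exp, mul_assoc]

lemma rpow_neg_le_mul_rpow_neg {k x y : ℝ} (hk : 0 < k) (hx : 0 < x) (hxy : x ≤ k * y)
    (ht : 0 ≤ t) : y ^ (-t) ≤ k ^ t * x ^ (-t) := by
  have hy : 0 < y := pos_of_mul_pos_right (hx.trans_le hxy) hk.le
  calc y ^ (-t) = k ^ t * (k * y) ^ (-t) := by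
        rw [Real.mul_rpow hk.le hy.le, ← mul_assoc, ← Real.rpow_add hk, add_neg_cancel,
          Real.rpow_zero, one_mul]
    _ ≤ k ^ t * x ^ (-t) := by
        have hle := Real.rpow_le_rpow_of_nonpos hx hxy (neg_nonpos.2 ht)
        gcongr

end Exponents

section GoldenExponent

variable {α₁ α₂ t : ℝ} {a b c : ℤ × ℤ × ℤ}

lemma exists_pos_hgt_le_abs_zform_lt (ht : 1 < t) (hτ : t ≤ tau)
    (hab : ConsecutiveBest α₁ α₂ a b) (hbc : hgt b ≤ hgt c)
    (hζ : |zform α₁ α₂ c| ≤ |zform α₁ α₂ b|)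
    (hdet : Matrix.det !![a.1, a.2.1, a.2.2; b.1, b.2.1, b.2.2; c.1, c.2.1, c.2.2] ≠ 0)
    (hζb : |zform α₁ α₂ b| < (hgt b : ℝ) ^ (1 / t) / 120 * (hgt c : ℝ) ^ (-(t / (t - 1))))
    (hζc : |zform α₁ α₂ c| ≤ (8 * (hgt a : ℝ) * (hgt b : ℝ))⁻¹) :
    ∃ x : ℤ × ℤ × ℤ, 0 < x.2.1 ∧ 0 < x.2.2 ∧ hgt x ≤ 4 * hgt c ∧
      |zform α₁ α₂ x| < (hgt b : ℝ) ^ ((1 - t) / t) * (hgt c : ℝ) ^ (-t) / 24 := by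
  have hb : (2 : ℝ) ≤ hgt b := by exact_mod_cast hab.two_le_hgt
  have hbc' : (hgt b : ℝ) ≤ hgt c := by exact_mod_cast hbc
  have hζb_sq : |zform α₁ α₂ b| * (hgt c : ℝ) ^ 2 ≤ 1 / 24 := by
    have hpow := rpow_mul_rpow_mul_sq_le_one ht hτ (by linarith) hbc' (by linarith)
    have hmul := mul_le_mul_of_nonneg_right hζb.le (sq_nonneg (hgt c : ℝ))
    linarith
  have hminor : hgt b ^ 2 < 2 * |planarMinor b c| :=
    hgt_sq_lt_two_mul_abs_planarMinor hab.two_le_hgt hdet hab.abs_zform_mul_hgt_sq_sub_one_lt_one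
      (abs_zform_mul_hgt_add_le_one_third hab.1.1 hab.2.2.1.le hbc hζb_sq hζc)
  obtain ⟨x, hx₁, hx₂, hx, hζx⟩ := exists_pos_hgt_mul_abs_zform_le hab.2.1.1 hbc hζ hminor
  refine ⟨x, hx₁, hx₂, hx, lt_of_mul_lt_mul_left (a := (hgt b : ℝ)) ?_ (by linarith)⟩
  have hmul := mul_lt_mul_of_pos_left hζb (by linarith : (0 : ℝ) < hgt c)
  have hpow := mul_rpow_mul_rpow_le (B := hgt b) (C := hgt c) ht hτ (by linarith) (by linarith)
  linarith

theorem corollary3_general (ht : 1 < t) (hτ : t ≤ tau)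
    (hab : ConsecutiveBest α₁ α₂ a b) (hbc : hgt b ≤ hgt c)
    (hζ : |zform α₁ α₂ c| ≤ |zform α₁ α₂ b|)
    (hdet : Matrix.det !![a.1, a.2.1, a.2.2; b.1, b.2.1, b.2.2; c.1, c.2.1, c.2.2] ≠ 0)
    (hζb : |zform α₁ α₂ b| < (hgt b : ℝ) ^ (1 / t) / 120 * (hgt c : ℝ) ^ (-(t / (t - 1))))
    (hζc : |zform α₁ α₂ c| ≤ (8 * (hgt a : ℝ) * (hgt b : ℝ))⁻¹) :
    ∃ x : ℤ × ℤ, 0 < x.1 ∧ 0 < x.2 ∧ ((max x.1 x.2 : ℤ) : ℝ) ≤ 20 * (hgt c : ℝ) ∧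
      nint (α₁ * x.1 + α₂ * x.2) <
        24 ^ t * (hgt b : ℝ) ^ ((1 - t) / t) * ((max x.1 x.2 : ℤ) : ℝ) ^ (-t) := by
  obtain ⟨x, hx₁, hx₂, hx, hζx⟩ := exists_pos_hgt_le_abs_zform_lt ht hτ hab hbc hζ hdet hζb hζc
  have hmax : hgt x = max x.2.1 x.2.2 := by rw [hgt, abs_of_pos hx₁, abs_of_pos hx₂]
  have hx_pos : (0 : ℝ) < hgt x := by exact_mod_cast hmax ▸ lt_max_of_lt_left hx₁
  have hx_le : (hgt x : ℝ) ≤ 4 * hgt c := by exact_mod_cast hx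
  have hb : (0 : ℝ) < hgt b := by exact_mod_cast hab.2.1.1
  have hc : (0 : ℝ) < hgt c := by linarith
  have hrpow : (hgt c : ℝ) ^ (-t) ≤ 24 ^ t * (hgt x : ℝ) ^ (-t) :=
    rpow_neg_le_mul_rpow_neg (by norm_num) hx_pos (by linarith) (by linarith)
  refine ⟨x.2, hx₁, hx₂, ?_, ?_⟩ <;> rw [← hmax]
  · linarith
  calc nint (α₁ * x.2.1 + α₂ * x.2.2)
      ≤ |zform α₁ α₂ x| := nint_le_abs_zform x
    _ < (hgt b : ℝ) ^ ((1 - t) / t) * (hgt c : ℝ) ^ (-t) / 24 := hζx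
    _ ≤ (hgt b : ℝ) ^ ((1 - t) / t) * (hgt c : ℝ) ^ (-t) :=
        div_le_self (by positivity) (by norm_num)
    _ ≤ (hgt b : ℝ) ^ ((1 - t) / t) * (24 ^ t * (hgt x : ℝ) ^ (-t)) := by gcongr
    _ = 24 ^ t * (hgt b : ℝ) ^ ((1 - t) / t) * (hgt x : ℝ) ^ (-t) := by ring

end GoldenExponent

/-- Corollary 3: with A_ν = M_ν^{1/τ}/120, if ζ_ν < A_ν·M_{ν+1}^{−τ/(τ−1)} and
ζ_{ν+1} ≤ (8M_{ν−1}M_ν)⁻¹, then there is an integer point with positive coordinates,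
max{x₁⁰,x₂⁰} ≤ 20M_{ν+1}, and ‖α₁x₁⁰+α₂x₂⁰‖ < 24^τ·M_ν^{(1−τ)/τ}·(max{x₁⁰,x₂⁰})^{−τ}. -/
theorem corollary3 (α₁ α₂ : ℝ) (h : ZLinIndep α₁ α₂)
    (a b c : ℤ × ℤ × ℤ)
    (hab : ConsecutiveBest α₁ α₂ a b) (hbc : ConsecutiveBest α₁ α₂ b c)
    (hdet : Matrix.det !![a.1, a.2.1, a.2.2; b.1, b.2.1, b.2.2; c.1, c.2.1, c.2.2] ≠ 0)
    (h1 : |zform α₁ α₂ b| <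
      (hgt b : ℝ) ^ (1 / tau) / 120 * (hgt c : ℝ) ^ (-(tau / (tau - 1))))
    (h2 : |zform α₁ α₂ c| ≤ (8 * (hgt a : ℝ) * (hgt b : ℝ))⁻¹) :
    ∃ x : ℤ × ℤ, 0 < x.1 ∧ 0 < x.2 ∧
      ((max x.1 x.2 : ℤ) : ℝ) ≤ 20 * (hgt c : ℝ) ∧
      nint (α₁ * x.1 + α₂ * x.2) <
        24 ^ tau * (hgt b : ℝ) ^ ((1 - tau) / tau) * ((max x.1 x.2 : ℤ) : ℝ) ^ (-tau) := by
  exact corollary3_general one_lt_tau le_rfl hab hbc.2.2.1.le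
    (hbc.2.1.2 b hbc.1.1 hbc.2.2.1.le) hdet h1 h2
end

section
/- Let ξ, η ∈ ℤ² be integer vectors, let M = max of the absolute values of the two coordinates of ξ, and let D = |ξ₁η₂ − ξ₂η₁| be the absolute value of their determinant. Suppose M > 0 and 2·D ≥ M². Then every closed disc in ℝ² of radius 4·D/M contains at least one point of the lattice Λ = ℤξ + ℤη. -/
/-!
Write `ω` for the area form. Subtracting a suitable multiple of `η` from `c` makes `|ω ξ ·|` at most
`D / 2`, where `D = |ω ξ η|`; then subtracting a multiple of `ξ` leaves `ω ξ ·` unchanged and makes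
the component along `ξ` at most `‖ξ‖ / 2`. By Pythagoras the squared distance from `c` to the
lattice is at most `(‖ξ‖² + (D / ‖ξ‖)²) / 4`. Since `M ≤ ‖ξ‖ ≤ √2 M` and `M ≤ 2D / M`, this is at
most `(8 + 1) / 4 · (D / M)²`, so already the radius `3D / (2M)` suffices.
-/

open scoped RealInnerProductSpace

attribute [local instance] Complex.finrank_real_complex_fact

lemma exists_int_abs_sub_mul_le {K : Type*} [Field K] [LinearOrder K] [IsStrictOrderedRing K]
    [FloorRing K] {d : K} (hd : d ≠ 0) (x : K) : ∃ n : ℤ, |x - n * d| ≤ |d| / 2 := by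
  refine ⟨round (x / d), ?_⟩
  calc |x - round (x / d) * d| = |x / d - round (x / d)| * |d| := by
        rw [← abs_mul, sub_mul, div_mul_cancel₀ x hd]
    _ ≤ 1 / 2 * |d| := by gcongr; exact abs_sub_round _
    _ = |d| / 2 := by ring

section Plane

variable {E : Type*} [NormedAddCommGroup E] [InnerProductSpace ℝ E]
  [Fact (Module.finrank ℝ E = 2)] (o : Orientation ℝ E (Fin 2))

lemma norm_sq_eq_inner_div_sq_add_areaForm_div_sq {ξ : E} (hξ : ξ ≠ 0) (v : E) :
    ‖v‖ ^ 2 = (⟪ξ, v⟫ / ‖ξ‖) ^ 2 + (o.areaForm ξ v / ‖ξ‖) ^ 2 := by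
  have hnorm : ‖ξ‖ ^ 2 ≠ 0 := pow_ne_zero 2 (norm_ne_zero_iff.mpr hξ)
  rw [div_pow, div_pow, ← add_div, o.inner_sq_add_areaForm_sq, mul_div_cancel_left₀ _ hnorm]

lemma exists_lattice_point_norm_sub_sq_le {ξ η : E} (hω : o.areaForm ξ η ≠ 0) (c : E) :
    ∃ l μ : ℤ, ‖c - (l • ξ + μ • η)‖ ^ 2 ≤ (‖ξ‖ ^ 2 + (o.areaForm ξ η / ‖ξ‖) ^ 2) / 4 := by
  have hξ : ξ ≠ 0 := by rintro rfl; simp at hω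
  have hnorm : 0 < ‖ξ‖ := norm_pos_iff.mpr hξ
  obtain ⟨μ, hμ⟩ := exists_int_abs_sub_mul_le hω (o.areaForm ξ c)
  obtain ⟨l, hl⟩ := exists_int_abs_sub_mul_le (pow_pos hnorm 2).ne' ⟪ξ, c - μ • η⟫
  refine ⟨l, μ, ?_⟩
  set v := c - (l • ξ + μ • η) with hv
  have harea : |o.areaForm ξ v / ‖ξ‖| ≤ |o.areaForm ξ η / ‖ξ‖ / 2| := by
    have hv_area : o.areaForm ξ v = o.areaForm ξ c - μ * o.areaForm ξ η := by simp [hv]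
    rw [hv_area, div_right_comm, abs_div, abs_div _ ‖ξ‖, abs_div _ 2, abs_two]
    gcongr
  have hinner : |⟪ξ, v⟫ / ‖ξ‖| ≤ |‖ξ‖ / 2| := by
    have hv_inner : ⟪ξ, v⟫ = ⟪ξ, c - μ • η⟫ - l * ‖ξ‖ ^ 2 := by
      rw [hv, add_comm, ← sub_sub, inner_sub_right, ← Int.cast_smul_eq_zsmul ℝ l,
        real_inner_smul_right, real_inner_self_eq_norm_sq]
    rw [hv_inner, abs_div, abs_norm, div_le_iff₀ hnorm]
    refine hl.trans_eq ?_
    rw [abs_of_pos (by positivity), abs_of_pos (by positivity)]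
    ring
  calc ‖v‖ ^ 2 = (⟪ξ, v⟫ / ‖ξ‖) ^ 2 + (o.areaForm ξ v / ‖ξ‖) ^ 2 :=
        norm_sq_eq_inner_div_sq_add_areaForm_div_sq o hξ v
    _ ≤ (‖ξ‖ / 2) ^ 2 + (o.areaForm ξ η / ‖ξ‖ / 2) ^ 2 :=
        add_le_add (sq_le_sq.mpr hinner) (sq_le_sq.mpr harea)
    _ = (‖ξ‖ ^ 2 + (o.areaForm ξ η / ‖ξ‖) ^ 2) / 4 := by ring

lemma exists_lattice_point_norm_sub_le {ξ η : E} {M : ℝ} (hM : 0 < M) (hMξ : M ≤ ‖ξ‖)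
    (hξM : ‖ξ‖ ≤ √2 * M) (hω : M ^ 2 ≤ 2 * |o.areaForm ξ η|) (c : E) :
    ∃ l μ : ℤ, ‖c - (l • ξ + μ • η)‖ ≤ 3 / 2 * |o.areaForm ξ η| / M := by
  have hω_pos : 0 < |o.areaForm ξ η| := by linarith [pow_pos hM 2]
  obtain ⟨l, μ, h⟩ := exists_lattice_point_norm_sub_sq_le o (abs_pos.mp hω_pos) c
  refine ⟨l, μ, (sq_le_sq₀ (norm_nonneg _) (by positivity)).mp ?_⟩
  have hM_le : M ≤ 2 * (|o.areaForm ξ η| / M) := by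
    rw [← mul_div_assoc, le_div_iff₀ hM]
    linarith
  calc ‖c - (l • ξ + μ • η)‖ ^ 2 ≤ (‖ξ‖ ^ 2 + (|o.areaForm ξ η| / ‖ξ‖) ^ 2) / 4 := by
        rwa [div_pow |_|, sq_abs, ← div_pow]
    _ ≤ ((√2 * (2 * (|o.areaForm ξ η| / M))) ^ 2 + (|o.areaForm ξ η| / M) ^ 2) / 4 := by
        gcongr
        exact hξM.trans (by gcongr)
    _ = (3 / 2 * |o.areaForm ξ η| / M) ^ 2 := by
        rw [mul_pow, Real.sq_sqrt zero_le_two]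
        ring

end Plane

theorem lattice_point_in_disc_general (ξ η : ℝ × ℝ) (M D : ℝ)
    (hMdef : M = max |ξ.1| |ξ.2|) (hDdef : D = |ξ.1 * η.2 - ξ.2 * η.1|)
    (hM : 0 < M) (hD : M ^ 2 ≤ 2 * D) (center : ℝ × ℝ) :
    ∃ l μ : ℤ, √((l * ξ.1 + μ * η.1 - center.1) ^ 2 + (l * ξ.2 + μ * η.2 - center.2) ^ 2)
      ≤ 3 / 2 * D / M := by
  let z : ℂ := ⟨ξ.1, ξ.2⟩
  let w : ℂ := ⟨η.1, η.2⟩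
  have hω : D = |Complex.orientation.areaForm z w| := by
    simp [hDdef, Complex.areaForm, z, w, sub_eq_add_neg]
  have hMz : M ≤ ‖z‖ := hMdef ▸ max_le (Complex.abs_re_le_norm z) (Complex.abs_im_le_norm z)
  have hzM : ‖z‖ ≤ √2 * M := hMdef ▸ Complex.norm_le_sqrt_two_mul_max z
  obtain ⟨l, μ, h⟩ := exists_lattice_point_norm_sub_le Complex.orientation hM hMz hzM (hω ▸ hD)
    ⟨center.1, center.2⟩
  refine ⟨l, μ, ?_⟩
  rw [← hω, norm_sub_rev, Complex.norm_eq_sqrt_sq_add_sq] at h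
  simpa [z, w] using h

/-- If ξ, η ∈ ℤ² with M = max{|ξ₁|,|ξ₂|} > 0 and D = |ξ₁η₂ − ξ₂η₁| satisfying 2D ≥ M²,
then every closed Euclidean disc of radius 4D/M in ℝ² contains a point of ℤξ + ℤη. -/
theorem lattice_point_in_disc (ξ η : ℤ × ℤ) (M D : ℤ)
    (hMdef : M = max |ξ.1| |ξ.2|) (hDdef : D = |ξ.1 * η.2 - ξ.2 * η.1|)
    (hM : 0 < M) (hD : (M : ℝ) ^ 2 ≤ 2 * (D : ℝ)) :
    ∀ center : ℝ × ℝ, ∃ l μ : ℤ,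
      Real.sqrt ((((l * ξ.1 + μ * η.1 : ℤ) : ℝ) - center.1) ^ 2 +
                 (((l * ξ.2 + μ * η.2 : ℤ) : ℝ) - center.2) ^ 2)
        ≤ 4 * (D : ℝ) / (M : ℝ) := by
  intro center
  obtain ⟨l, μ, h⟩ := lattice_point_in_disc_general (ξ.1, ξ.2) (η.1, η.2) M D
    (by simp [hMdef]) (by simp [hDdef]) (mod_cast hM) hD center
  have hD_nonneg : 0 ≤ D := hDdef ▸ abs_nonneg _
  refine ⟨l, μ, ?_⟩
  push_cast
  exact h.trans (by gcongr; norm_num)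
end

section
/- Let ξ, η ∈ ℤ² be integer vectors, let M = max of the absolute values of the two coordinates of ξ, and let D = |ξ₁η₂ − ξ₂η₁| > 0. Suppose M > 0 and 2·D ≥ M². Then there exist integers λ, μ such that the point (x₁⁰, x₂⁰) = λξ + μη has both coordinates positive and satisfies max{x₁⁰, x₂⁰} ≤ 10·D/M; moreover |λ| ≤ 20·N/M and |μ| ≤ 20, where N = max of the absolute values of the two coordinates of η, provided N ≥ M. -/
/-!
Suppose `M = |ξ₁|`. Translating `μη` by a multiple of `ξ` puts its first coordinate `x₁` into
`(0, M]`. Since `ξ₁ x₂ = ξ₂ x₁ + μ (ξ₁ η₂ - ξ₂ η₁)`, for `μ = ±3` with the right sign `M x₂` then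
differs from `3D` by at most `M² ≤ 2D`, so that `D ≤ M x₂ ≤ 5D`. Finally `M² ≤ 2D ≤ 4MN` gives
`M ≤ 4N`, and `λ ξ₁ = x₁ - μ η₁` bounds `λ`.
-/

section LinearOrderedGroup

variable {G : Type*} [AddCommGroup G] [LinearOrder G]

lemma exists_int_abs_eq_and_zsmul_eq_nsmul_abs (k : ℕ) (x : G) :
    ∃ m : ℤ, |m| = k ∧ m • x = k • |x| := by
  rcases abs_choice x with hx | hx
  · exact ⟨k, Nat.abs_cast k, by rw [hx, natCast_zsmul]⟩
  · exact ⟨-k, by rw [abs_neg, Nat.abs_cast], by rw [hx, neg_zsmul, natCast_zsmul, smul_neg]⟩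

lemma exists_zsmul_add_mem_Ioc_abs [IsOrderedAddMonoid G] [Archimedean G] {a : G} (ha : a ≠ 0)
    (c : G) : ∃ l : ℤ, l • a + c ∈ Set.Ioc 0 |a| := by
  obtain ⟨l, hl, -⟩ := existsUnique_add_zsmul_mem_Ioc (abs_pos.2 ha) c 0
  rw [zero_add, add_comm] at hl
  rcases abs_choice a with h | h
  · exact ⟨l, by rwa [h] at hl ⊢⟩
  · exact ⟨-l, by rwa [h, zsmul_neg, ← neg_zsmul, ← h] at hl⟩

end LinearOrderedGroup

section LinearOrderedRing

variable {R : Type*} [CommRing R] [LinearOrder R] [IsStrictOrderedRing R]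

lemma abs_mul_sub_mul_le {a b c d M N : R} (ha : |a| ≤ M) (hb : |b| ≤ M) (hc : |c| ≤ N)
    (hd : |d| ≤ N) : |a * d - b * c| ≤ 2 * (M * N) := by
  have hM : 0 ≤ M := (abs_nonneg a).trans ha
  calc |a * d - b * c| ≤ |a| * |d| + |b| * |c| := by
        simpa only [abs_mul] using abs_sub (a * d) (b * c)
    _ ≤ M * N + M * N := by gcongr
    _ = 2 * (M * N) := by ring

variable [Archimedean R]

lemma exists_int_comb_mem_Ioc_and_abs_sub_le (k : ℕ) {a : R} (ha : a ≠ 0) (b c d : R) :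
    ∃ l m : ℤ, |m| = k ∧ l * a + m * c ∈ Set.Ioc 0 |a| ∧
      |(|a| * (l * b + m * d) - k * |a * d - b * c|)| ≤ |a| * |b| := by
  obtain ⟨m, hm, hmul⟩ := exists_int_abs_eq_and_zsmul_eq_nsmul_abs k (a * (a * d - b * c))
  obtain ⟨l, hx⟩ := exists_zsmul_add_mem_Ioc_abs ha (m * c)
  rw [zsmul_eq_mul, nsmul_eq_mul, abs_mul] at hmul
  rw [zsmul_eq_mul] at hx
  refine ⟨l, m, hm, hx, le_of_mul_le_mul_left ?_ (abs_pos.2 ha)⟩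
  set x := l * a + m * c with hxdef
  have hcross : |a| * (|a| * (l * b + m * d) - k * |a * d - b * c|) = a * b * x := by
    linear_combination (l * b + m * d) * abs_mul_abs_self a + hmul - a * b * hxdef
  calc |a| * |(|a| * (l * b + m * d) - k * |a * d - b * c|)|
      = |a * b * x| := by rw [← hcross, abs_mul, abs_abs]
    _ = |a| * |b| * x := by rw [abs_mul, abs_mul, abs_of_pos hx.1]
    _ ≤ |a| * |b| * |a| := by gcongr; exact hx.2
    _ = |a| * (|a| * |b|) := by ring

lemma exists_int_comb_pos_of_abs_le {a b c d N : R} (ha : a ≠ 0) (hba : |b| ≤ |a|)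
    (hc : |c| ≤ N) (hd : |d| ≤ N) (hdet : |a| ^ 2 ≤ 2 * |a * d - b * c|) :
    ∃ l m : ℤ, 0 < l * a + m * c ∧ 0 < l * b + m * d ∧
      |a| * (l * a + m * c) ≤ 5 * |a * d - b * c| ∧
      |a| * (l * b + m * d) ≤ 5 * |a * d - b * c| ∧ |a| * |(l : R)| ≤ 7 * N ∧ |m| = 3 := by
  have ha_pos : 0 < |a| := abs_pos.2 ha
  have hsq_pos : 0 < |a| ^ 2 := pow_pos ha_pos 2
  have hab : |a| * |b| ≤ |a| ^ 2 := by rw [sq]; gcongr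
  have haN : |a| ≤ 4 * N := by
    refine le_of_mul_le_mul_left ?_ ha_pos
    linarith [abs_mul_sub_mul_le le_rfl hba hc hd]
  obtain ⟨l, m, hm, ⟨hx_pos, hx_le⟩, hy⟩ := exists_int_comb_mem_Ioc_and_abs_sub_le 3 ha b c d
  obtain ⟨hy_lower, hy_upper⟩ := abs_le.1 hy
  push_cast at hm hy_lower hy_upper
  have hmR : |(m : R)| = 3 := by exact_mod_cast congrArg (Int.cast : ℤ → R) hm
  refine ⟨l, m, hx_pos, pos_of_mul_pos_right (a := |a|) (by linarith) ha_pos.le, ?_,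
    by linarith, ?_, hm⟩
  · have : |a| * (l * a + m * c) ≤ |a| ^ 2 := by rw [sq]; gcongr
    linarith
  · calc |a| * |(l : R)| = |(l * a + m * c) - m * c| := by
          rw [add_sub_cancel_right, abs_mul, mul_comm]
      _ ≤ |l * a + m * c| + |m * c| := abs_sub _ _
      _ = (l * a + m * c) + 3 * |c| := by rw [abs_of_pos hx_pos, abs_mul, hmR]
      _ ≤ 7 * N := by linarith

theorem lattice_point_positive_general (ξ η : R × R) (M N D : R)
    (hMdef : M = max |ξ.1| |ξ.2|) (hNdef : N = max |η.1| |η.2|)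
    (hDdef : D = |ξ.1 * η.2 - ξ.2 * η.1|) (hM : 0 < M) (hD : M ^ 2 ≤ 2 * D) :
    ∃ l μ : ℤ,
      0 < l * ξ.1 + μ * η.1 ∧ 0 < l * ξ.2 + μ * η.2 ∧
      M * max (l * ξ.1 + μ * η.1) (l * ξ.2 + μ * η.2) ≤ 5 * D ∧
      M * |(l : R)| ≤ 7 * N ∧ |μ| = 3 := by
  have hη₁ : |η.1| ≤ N := hNdef ▸ le_max_left _ _
  have hη₂ : |η.2| ≤ N := hNdef ▸ le_max_right _ _
  simp only [mul_max_of_nonneg _ _ hM.le, max_le_iff]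
  rcases le_total |ξ.2| |ξ.1| with h | h
  · rw [max_eq_left h] at hMdef
    subst hMdef hDdef
    obtain ⟨l, μ, hx, hy, hx_le, hy_le, hl, hμ⟩ :=
      exists_int_comb_pos_of_abs_le (abs_pos.1 hM) h hη₁ hη₂ hD
    exact ⟨l, μ, hx, hy, ⟨hx_le, hy_le⟩, hl, hμ⟩
  · rw [max_eq_right h] at hMdef
    rw [abs_sub_comm] at hDdef
    subst hMdef hDdef
    obtain ⟨l, μ, hy, hx, hy_le, hx_le, hl, hμ⟩ :=
      exists_int_comb_pos_of_abs_le (abs_pos.1 hM) h hη₂ hη₁ hD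
    exact ⟨l, μ, hx, hy, ⟨hx_le, hy_le⟩, hl, hμ⟩

end LinearOrderedRing

/-- If ξ, η ∈ ℤ² with M = max{|ξ₁|,|ξ₂|} > 0, D = |ξ₁η₂ − ξ₂η₁| > 0, 2D ≥ M², and
N = max{|η₁|,|η₂|} ≥ M, then there are integers λ, μ such that λξ + μη has both
coordinates positive, max coordinate ≤ 10D/M, |λ| ≤ 20N/M and |μ| ≤ 20. -/
theorem lattice_point_positive (ξ η : ℤ × ℤ) (M N D : ℤ)
    (hMdef : M = max |ξ.1| |ξ.2|) (hNdef : N = max |η.1| |η.2|)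
    (hDdef : D = |ξ.1 * η.2 - ξ.2 * η.1|)
    (hM : 0 < M) (hDpos : 0 < D) (hD : (M : ℝ) ^ 2 ≤ 2 * (D : ℝ)) (hNM : M ≤ N) :
    ∃ l μ : ℤ,
      0 < l * ξ.1 + μ * η.1 ∧ 0 < l * ξ.2 + μ * η.2 ∧
      ((max (l * ξ.1 + μ * η.1) (l * ξ.2 + μ * η.2) : ℤ) : ℝ) ≤ 10 * (D : ℝ) / (M : ℝ) ∧
      (|l| : ℝ) ≤ 20 * (N : ℝ) / (M : ℝ) ∧ |μ| ≤ 20 := by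
  obtain ⟨l, μ, hx, hy, hmax, hl, hμ⟩ :=
    lattice_point_positive_general ξ η M N D hMdef hNdef hDdef hM (mod_cast hD)
  have hM_real : (0 : ℝ) < M := mod_cast hM
  simp only [Int.cast_id] at hx hy hmax hl
  refine ⟨l, μ, hx, hy, (le_div_iff₀' hM_real).2 ?_, (le_div_iff₀' hM_real).2 ?_, by linarith⟩
  · exact_mod_cast hmax.trans (by linarith)
  · exact_mod_cast hl.trans (by linarith)
end
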